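/- Let α > 1 be real, let P ⊂ ℝ be finite with 0 ∈ P (source 0), and let k ≥ 1 be an integer. Then there exists a feasible range assignment ρ for P with cost_α(ρ) ≤ (1 + 2^α/k^{α−1})·opt_α(P) such that at most k points p ∈ P ∖ {0} that possess a successor satisfy ρ(p) < |suc(p) − p|. Here, for p ∈ P with p > 0 the successor suc(p) is min{q ∈ P : q > p} (when this set is nonempty), and for p ∈ P with p < 0 it is max{q ∈ P : q < p} (when this set is nonempty). (This is the cost guarantee of the canonical range assignment ρ_k, in which all but at most k of the zero-range points of an optimal solution are given their standard range.) -/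

import Mathlib

open Finset

attribute [local instance] Classical.propDecidable

/-- A range assignment `ρ` for a finite point set `P` with source `s` is *feasible* if it is
nonnegative on `P` and every point of `P` is reachable from `s` via a sequence of points of `P`
in which each step is within the range of its starting point. -/
def Feasible {X : Type*} [MetricSpace X] (P : Finset X) (s : X) (ρ : X → ℝ) : Prop :=
  (∀ p ∈ P, 0 ≤ ρ p) ∧
  ∀ p ∈ P, ∃ (m : ℕ) (f : ℕ → X), f 0 = s ∧ f m = p ∧ (∀ i ≤ m, f i ∈ P) ∧
    ∀ i < m, dist (f i) (f (i + 1)) ≤ ρ (f i)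

/-- The cost `∑_{p ∈ P} ρ(p)^α` of a range assignment. -/
noncomputable def cost {X : Type*} (α : ℝ) (P : Finset X) (ρ : X → ℝ) : ℝ :=
  ∑ p ∈ P, ρ p ^ α

/-- The optimal broadcast cost: the infimum of `cost α P ρ` over feasible `ρ`. -/
noncomputable def opt {X : Type*} [MetricSpace X] (α : ℝ) (P : Finset X) (s : X) : ℝ :=
  sInf {c : ℝ | ∃ ρ : X → ℝ, Feasible P s ρ ∧ cost α P ρ = c}

/-- `p` has a successor in `P`: a point of `P` strictly beyond `p` on the same side of the
source 0. -/
def HasSuc (P : Finset ℝ) (p : ℝ) : Prop :=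
  (0 < p ∧ ∃ q ∈ P, p < q) ∨ (p < 0 ∧ ∃ q ∈ P, q < p)

/-- The successor of `p` in `P`: the nearest point of `P` strictly to the right of `p` if
`p > 0`, and the nearest point strictly to the left of `p` if `p < 0`. -/
noncomputable def suc (P : Finset ℝ) (p : ℝ) : ℝ :=
  if 0 < p then sInf {q | q ∈ P ∧ p < q} else sSup {q | q ∈ P ∧ q < p}


/-- `pre` is a predecessor map: the neighbour in the direction of the source. -/
structure IsPre (P : Finset ℝ) (pre : ℝ → ℝ) : Prop where
  mem : ∀ q ∈ P, q ≠ 0 → pre q ∈ P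
  pos : ∀ q ∈ P, 0 < q → 0 ≤ pre q ∧ pre q < q ∧ ∀ x ∈ P, x < q → x ≤ pre q
  neg : ∀ q ∈ P, q < 0 → pre q ≤ 0 ∧ q < pre q ∧ ∀ x ∈ P, q < x → pre q ≤ x

theorem exists_isPre (P : Finset ℝ) (hP : (0:ℝ) ∈ P) : ∃ pre, IsPre P pre := by
  have key : ∀ q : ℝ, ∃ p : ℝ, (q ∈ P → q ≠ 0 → p ∈ P) ∧
      (0 < q → 0 ≤ p ∧ p < q ∧ ∀ x ∈ P, x < q → x ≤ p) ∧
      (q < 0 → p ≤ 0 ∧ q < p ∧ ∀ x ∈ P, q < x → p ≤ x) := by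
    intro q
    rcases lt_trichotomy q 0 with h | h | h
    · obtain ⟨p, hp, hm⟩ := Finset.exists_min_image (P.filter (fun x => q < x)) id
        ⟨0, by simp [hP, h]⟩
      simp only [Finset.mem_filter, id] at hp hm
      refine ⟨p, fun _ _ => hp.1, fun h' => absurd h' (not_lt.2 h.le), fun _ =>
        ⟨hm 0 ⟨hP, h⟩, hp.2, fun x hx hq => hm x ⟨hx, hq⟩⟩⟩
    · exact ⟨0, fun _ h' => absurd h h', fun h' => by simp [h] at h', fun h' => by simp [h] at h'⟩
    · obtain ⟨p, hp, hm⟩ := Finset.exists_max_image (P.filter (fun x => x < q)) id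
        ⟨0, by simp [hP, h]⟩
      simp only [Finset.mem_filter, id] at hp hm
      refine ⟨p, fun _ _ => hp.1, fun _ =>
        ⟨hm 0 ⟨hP, h⟩, hp.2, fun x hx hq => hm x ⟨hx, hq⟩⟩, fun h' => absurd h' (not_lt.2 h.le)⟩
  choose pre h1 h2 h3 using key
  exact ⟨pre, h1, fun q _ => h2 q, fun q _ => h3 q⟩

theorem sum_len {P : Finset ℝ} {pre : ℝ → ℝ} (h : IsPre P pre) (F : Finset ℝ)
    (hF : ∀ q ∈ F, q ∈ P ∧ q ≠ 0) (x y : ℝ) (hxy : x ≤ y)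
    (hin : ∀ q ∈ F, x ≤ q ∧ q ≤ y ∧ x ≤ pre q ∧ pre q ≤ y) :
    ∑ q ∈ F, |q - pre q| ≤ y - x := by
  have hdis : (F : Set ℝ).PairwiseDisjoint
      (fun q => Set.Ioo (min q (pre q)) (max q (pre q))) := by
    intro q hq q' hq' hne
    rw [Function.onFun, Set.disjoint_left]
    rintro z ⟨hz1, hz2⟩ ⟨hz3, hz4⟩
    obtain ⟨hqP, hq0⟩ := hF q hq
    obtain ⟨hqP', hq0'⟩ := hF q' hq'
    rcases lt_or_gt_of_ne hq0 with hs | hs <;> rcases lt_or_gt_of_ne hq0' with hs' | hs'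
    · obtain ⟨a1, a2, a3⟩ := h.neg q hqP hs
      obtain ⟨b1, b2, b3⟩ := h.neg q' hqP' hs'
      rw [min_eq_left a2.le] at hz1
      rw [max_eq_right a2.le] at hz2
      rw [min_eq_left b2.le] at hz3
      rw [max_eq_right b2.le] at hz4
      rcases lt_or_gt_of_ne hne with hl | hl
      · linarith [a3 q' hqP' hl]
      · linarith [b3 q hqP hl]
    · obtain ⟨a1, a2, a3⟩ := h.neg q hqP hs
      obtain ⟨b1, b2, b3⟩ := h.pos q' hqP' hs'
      rw [max_eq_right a2.le] at hz2
      rw [min_eq_right b2.le] at hz3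
      linarith
    · obtain ⟨a1, a2, a3⟩ := h.pos q hqP hs
      obtain ⟨b1, b2, b3⟩ := h.neg q' hqP' hs'
      rw [min_eq_right a2.le] at hz1
      rw [max_eq_right b2.le] at hz4
      linarith
    · obtain ⟨a1, a2, a3⟩ := h.pos q hqP hs
      obtain ⟨b1, b2, b3⟩ := h.pos q' hqP' hs'
      rw [min_eq_right a2.le] at hz1
      rw [max_eq_left a2.le] at hz2
      rw [min_eq_right b2.le] at hz3
      rw [max_eq_left b2.le] at hz4
      rcases lt_or_gt_of_ne hne with hl | hl
      · linarith [b3 q hqP hl]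
      · linarith [a3 q' hqP' hl]
  have h1 : MeasureTheory.volume.real (⋃ q ∈ F, Set.Ioo (min q (pre q)) (max q (pre q)))
      = ∑ q ∈ F, |q - pre q| := by
    rw [MeasureTheory.measureReal_biUnion_finset hdis (fun _ _ => measurableSet_Ioo)
      (fun q _ => measure_Ioo_lt_top.ne)]
    refine Finset.sum_congr rfl fun q _ => ?_
    rw [Real.volume_real_Ioo_of_le (min_le_max), max_sub_min_eq_abs]
    exact abs_sub_comm _ _
  rw [← h1, ← Real.volume_real_Icc_of_le hxy]
  apply MeasureTheory.measureReal_mono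
  · intro z hz
    simp only [Set.mem_iUnion] at hz
    obtain ⟨q, hq, hz1, hz2⟩ := hz
    obtain ⟨i1, i2, i3, i4⟩ := hin q hq
    exact ⟨(le_min i1 i3).trans hz1.le, hz2.le.trans (max_le i2 i4)⟩
  · simp

theorem sum_rpow_le {ι : Type*} (F : Finset ι) (l : ι → ℝ) (α M S : ℝ) (hα : 1 < α)
    (hl : ∀ i ∈ F, 0 ≤ l i) (hM : ∀ i ∈ F, l i ≤ M) (hM0 : 0 ≤ M) (hS : ∑ i ∈ F, l i ≤ S) :
    ∑ i ∈ F, l i ^ α ≤ M ^ (α - 1) * S := by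
  calc ∑ i ∈ F, l i ^ α ≤ ∑ i ∈ F, M ^ (α - 1) * l i := by
        refine Finset.sum_le_sum fun i hi => ?_
        rcases (hl i hi).eq_or_lt with h0 | h0
        · rw [← h0, Real.zero_rpow (by linarith)]; simp
        · have : l i ^ α = l i ^ (α - 1) * l i := by
            rw [← Real.rpow_add_one h0.ne']; ring_nf
          rw [this]
          exact mul_le_mul_of_nonneg_right
            (Real.rpow_le_rpow h0.le (hM i hi) (by linarith)) h0.le
    _ = M ^ (α - 1) * ∑ i ∈ F, l i := by rw [Finset.mul_sum]
    _ ≤ _ := mul_le_mul_of_nonneg_left hS (Real.rpow_nonneg hM0 _)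

theorem rpow_sub_mul {x α : ℝ} (hα : 1 < α) (hx : 0 ≤ x) : x ^ (α - 1) * x = x ^ α := by
  rcases hx.eq_or_lt with h0 | h0
  · rw [← h0, Real.zero_rpow (by linarith : α ≠ 0)]; simp
  · rw [← Real.rpow_add_one h0.ne']; ring_nf

/-- Superadditivity for disjoint gaps. -/
theorem sum_len_rpow {P : Finset ℝ} {pre : ℝ → ℝ} (h : IsPre P pre) (α : ℝ) (hα : 1 < α)
    (F : Finset ℝ)
    (hF : ∀ q ∈ F, q ∈ P ∧ q ≠ 0) (x y R : ℝ) (hxy : x ≤ y) (hR : y - x ≤ R)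
    (hin : ∀ q ∈ F, x ≤ q ∧ q ≤ y ∧ x ≤ pre q ∧ pre q ≤ y) :
    ∑ q ∈ F, |q - pre q| ^ α ≤ R ^ α := by
  refine le_trans ?_ (Real.rpow_le_rpow (by linarith) hR (by linarith))
  rw [← rpow_sub_mul hα (by linarith : 0 ≤ y - x)]
  refine sum_rpow_le F _ α _ _ hα (fun _ _ => abs_nonneg _) ?_ (by linarith)
    (sum_len h F hF x y hxy hin)
  intro q hq
  obtain ⟨i1, i2, i3, i4⟩ := hin q hq
  rw [abs_le]; constructor <;> linarith

/-- Gap `(pre q, q)` is redundant for the disc centred at `c` with radius `|c - d|`. -/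
def InZ (pre : ℝ → ℝ) (c d q : ℝ) : Prop :=
  |q - c| ≤ |c - d| ∧ |pre q - c| ≤ |c - d| ∧ ¬(0 < q ∧ q ≤ c) ∧ ¬(c ≤ q ∧ q < 0)

/-- Cost of the structured solution with centre `c` and radius `|c - d|`. -/
noncomputable def SC (α : ℝ) (P : Finset ℝ) (pre : ℝ → ℝ) (c d : ℝ) : ℝ :=
  |c - d| ^ α + ∑ q ∈ P.filter (fun q => q ≠ 0 ∧ ¬ InZ pre c d q), |q - pre q| ^ α

/-- Invariant of the exploration process. -/
structure BInv (α : ℝ) (P : Finset ℝ) (pre : ℝ → ℝ) (ρ : ℝ → ℝ) (S : Finset ℝ) (a b : ℝ) :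
    Prop where
  sub : S ⊆ P
  aP : a ∈ P
  bP : b ∈ P
  a0 : a ≤ 0
  b0 : 0 ≤ b
  cov : ∀ w ∈ S, ∀ p ∈ P, |p - w| ≤ ρ w → a ≤ p ∧ p ≤ b
  gp : ∑ q ∈ P.filter (fun q => 0 < q ∧ q ≤ b), |q - pre q| ^ α ≤ ∑ w ∈ S, ρ w ^ α
  gn : ∑ q ∈ P.filter (fun q => q < 0 ∧ a ≤ q), |q - pre q| ^ α ≤ ∑ w ∈ S, ρ w ^ α
  str : ∃ c ∈ P, ∃ d ∈ P, |c - d| ^ α +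
    ∑ q ∈ P.filter (fun q => (q ≠ 0 ∧ a ≤ q ∧ q ≤ b) ∧ ¬ InZ pre c d q), |q - pre q| ^ α
      ≤ ∑ w ∈ S, ρ w ^ α

theorem sum_split_le (P : Finset ℝ) (g : ℝ → ℝ) (hg : ∀ q, 0 ≤ g q) (A B C : ℝ → Prop)
    [DecidablePred A] [DecidablePred B] [DecidablePred C]
    (h : ∀ q ∈ P, A q → B q ∨ C q) :
    ∑ q ∈ P.filter A, g q ≤ ∑ q ∈ P.filter B, g q + ∑ q ∈ P.filter C, g q := by
  have : P.filter A ⊆ P.filter B ∪ P.filter C := by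
    intro q hq
    simp only [Finset.mem_filter, Finset.mem_union] at hq ⊢
    have := h q hq.1 hq.2
    tauto
  calc _ ≤ ∑ q ∈ P.filter B ∪ P.filter C, g q :=
        Finset.sum_le_sum_of_subset_of_nonneg this (fun q _ _ => hg q)
    _ ≤ _ := by
        rw [← Finset.sum_union_inter]
        have := Finset.sum_nonneg (s := P.filter B ∩ P.filter C) (fun q _ => hg q)
        linarith

theorem BInv.step {α : ℝ} (hα : 1 < α) {P : Finset ℝ} (hP : (0:ℝ) ∈ P) {pre : ℝ → ℝ}
    (h : IsPre P pre)
    {ρ : ℝ → ℝ} (hρ : ∀ p ∈ P, 0 ≤ ρ p) {S : Finset ℝ} {a b : ℝ} (I : BInv α P pre ρ S a b)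
    {w : ℝ} (hw : w ∈ P) (haw : a ≤ w) (hwb : w ≤ b) (hwS : w ∉ S) :
    ∃ a' b', BInv α P pre ρ (insert w S) a' b' := by
  have hg : ∀ q, 0 ≤ |q - pre q| ^ α := fun q => Real.rpow_nonneg (abs_nonneg _) _
  have hwD : w ∈ P.filter (fun p => |p - w| ≤ ρ w) := by simp [hw, hρ w hw]
  obtain ⟨a2, ha2, hamin⟩ := Finset.exists_min_image (P.filter (fun p => |p - w| ≤ ρ w)) id
    ⟨w, hwD⟩
  obtain ⟨b2, hb2, hbmax⟩ := Finset.exists_max_image (P.filter (fun p => |p - w| ≤ ρ w)) id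
    ⟨w, hwD⟩
  have haw2 : a2 ≤ w := hamin w hwD
  have hbw2 : w ≤ b2 := hbmax w hwD
  simp only [Finset.mem_filter, id] at ha2 hb2 hamin hbmax
  have ra : w - a2 ≤ ρ w := by have := (abs_le.1 ha2.2).1; linarith
  have rb : b2 - w ≤ ρ w := by have := (abs_le.1 hb2.2).2; linarith
  have hT : ∑ v ∈ insert w S, ρ v ^ α = ∑ v ∈ S, ρ v ^ α + ρ w ^ α := by
    rw [Finset.sum_insert hwS]; ring
  -- new gaps on the right and left
  have newR : ∑ q ∈ P.filter (fun q => b < q ∧ q ≤ b2), |q - pre q| ^ α ≤ ρ w ^ α := by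
    refine sum_len_rpow h α hα _ ?_ w b2 _ hbw2 rb ?_
    · intro q hq
      simp only [Finset.mem_filter] at hq
      exact ⟨hq.1, by have := I.b0; intro h0; linarith⟩
    · intro q hq
      simp only [Finset.mem_filter] at hq
      obtain ⟨h1, h2, h3⟩ := h.pos q hq.1 (by linarith [I.b0])
      have := h3 b I.bP hq.2.1
      refine ⟨?_, ?_, ?_, ?_⟩ <;> linarith
  have newL : ∑ q ∈ P.filter (fun q => q < a ∧ a2 ≤ q), |q - pre q| ^ α ≤ ρ w ^ α := by
    refine sum_len_rpow h α hα _ ?_ a2 w _ haw2 ra ?_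
    · intro q hq
      simp only [Finset.mem_filter] at hq
      exact ⟨hq.1, by have := I.a0; intro h0; linarith⟩
    · intro q hq
      simp only [Finset.mem_filter] at hq
      obtain ⟨h1, h2, h3⟩ := h.neg q hq.1 (by linarith [I.a0])
      have := h3 a I.aP hq.2.1
      refine ⟨?_, ?_, ?_, ?_⟩ <;> linarith
  refine ⟨min a a2, max b b2, ?_, ?_, ?_, ?_, ?_, ?_, ?_, ?_, ?_⟩
  · intro v hv
    rcases Finset.mem_insert.1 hv with rfl | hv
    · exact hw
    · exact I.sub hv
  · rcases min_choice a a2 with e | e <;> rw [e]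
    exacts [I.aP, ha2.1]
  · rcases max_choice b b2 with e | e <;> rw [e]
    exacts [I.bP, hb2.1]
  · exact (min_le_left _ _).trans I.a0
  · exact I.b0.trans (le_max_left _ _)
  · intro v hv p hp hpv
    rcases Finset.mem_insert.1 hv with rfl | hv
    · exact ⟨(min_le_right _ _).trans (hamin p ⟨hp, hpv⟩),
        (hbmax p ⟨hp, hpv⟩).trans (le_max_right _ _)⟩
    · obtain ⟨h1, h2⟩ := I.cov v hv p hp hpv
      exact ⟨(min_le_left _ _).trans h1, h2.trans (le_max_left _ _)⟩
  · rw [hT]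
    refine (sum_split_le P _ hg _ (fun q => 0 < q ∧ q ≤ b) (fun q => b < q ∧ q ≤ b2) ?_).trans
      (add_le_add I.gp newR)
    rintro q hq ⟨h1, h2⟩
    rcases le_or_gt q b with h3 | h3
    · exact Or.inl ⟨h1, h3⟩
    · rcases le_max_iff.1 h2 with h4 | h4
      · linarith
      · exact Or.inr ⟨h3, h4⟩
  · rw [hT]
    refine (sum_split_le P _ hg _ (fun q => q < 0 ∧ a ≤ q) (fun q => q < a ∧ a2 ≤ q) ?_).trans
      (add_le_add I.gn newL)
    rintro q hq ⟨h1, h2⟩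
    rcases le_or_gt a q with h3 | h3
    · exact Or.inl ⟨h1, h3⟩
    · rcases min_le_iff.1 h2 with h4 | h4
      · linarith
      · exact Or.inr ⟨h3, h4⟩
  · rw [hT]
    obtain ⟨c, hc, d, hd, hcd⟩ := I.str
    by_cases ca : a ≤ a2
    · refine ⟨c, hc, d, hd, ?_⟩
      have := sum_split_le P _ hg (fun q => (q ≠ 0 ∧ min a a2 ≤ q ∧ q ≤ max b b2) ∧ ¬ InZ pre c d q)
        (fun q => (q ≠ 0 ∧ a ≤ q ∧ q ≤ b) ∧ ¬ InZ pre c d q) (fun q => b < q ∧ q ≤ b2) (by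
        rintro q hq ⟨⟨h0, h1, h2⟩, h5⟩
        rw [min_eq_left ca] at h1
        rcases le_or_gt q b with h3 | h3
        · exact Or.inl ⟨⟨h0, h1, h3⟩, h5⟩
        · rcases le_max_iff.1 h2 with h4 | h4
          · linarith
          · exact Or.inr ⟨h3, h4⟩)
      linarith
    by_cases cb : b2 ≤ b
    · refine ⟨c, hc, d, hd, ?_⟩
      have := sum_split_le P _ hg (fun q => (q ≠ 0 ∧ min a a2 ≤ q ∧ q ≤ max b b2) ∧ ¬ InZ pre c d q)
        (fun q => (q ≠ 0 ∧ a ≤ q ∧ q ≤ b) ∧ ¬ InZ pre c d q) (fun q => q < a ∧ a2 ≤ q) (by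
        rintro q hq ⟨⟨h0, h1, h2⟩, h5⟩
        rw [max_eq_left cb] at h2
        rcases le_or_gt a q with h3 | h3
        · exact Or.inl ⟨⟨h0, h3, h2⟩, h5⟩
        · rcases min_le_iff.1 h1 with h4 | h4
          · linarith
          · exact Or.inr ⟨h3, h4⟩)
      linarith
    push Not at ca cb
    rw [min_eq_right ca.le, max_eq_right cb.le]
    have a0 := I.a0
    have b0 := I.b0
    have hd' : ∃ d' ∈ P, |w - d'| ≤ ρ w ∧ w - a2 ≤ |w - d'| ∧ b2 - w ≤ |w - d'| := by
      rcases le_total (w - a2) (b2 - w) with hl | hl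
      · refine ⟨b2, hb2.1, ?_⟩
        rw [abs_sub_comm, abs_of_nonneg (by linarith)]
        exact ⟨rb, hl, le_rfl⟩
      · refine ⟨a2, ha2.1, ?_⟩
        rw [abs_of_nonneg (by linarith)]
        exact ⟨ra, le_rfl, hl⟩
    obtain ⟨d', hd', r1, r2, r3⟩ := hd'
    refine ⟨w, hw, d', hd', ?_⟩
    have e1 : |w - d'| ^ α ≤ ρ w ^ α := Real.rpow_le_rpow (abs_nonneg _) r1 (by linarith)
    have main : ∀ q ∈ P, (q ≠ 0 ∧ a2 ≤ q ∧ q ≤ b2) ∧ ¬ InZ pre w d' q →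
        (0 < q ∧ q ≤ w) ∨ (w ≤ q ∧ q < 0) := by
      rintro q hq ⟨⟨h0, h1, h2⟩, h5⟩
      by_contra hcon
      push Not at hcon
      apply h5
      have hpre : a2 ≤ pre q ∧ pre q ≤ b2 := by
        rcases lt_or_gt_of_ne h0 with hs | hs
        · obtain ⟨i1, i2, -⟩ := h.neg q hq hs
          constructor <;> linarith
        · obtain ⟨i1, i2, -⟩ := h.pos q hq hs
          constructor <;> linarith
      refine ⟨?_, ?_, ?_, ?_⟩
      · rw [abs_le]; constructor <;> linarith
      · rw [abs_le]; constructor <;> linarith [hpre.1, hpre.2]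
      · rintro ⟨i1, i2⟩; linarith [hcon.1 i1]
      · rintro ⟨i1, i2⟩; linarith [hcon.2 i1]
    rcases le_total 0 w with hw0 | hw0
    · have : ∑ q ∈ P.filter (fun q => (q ≠ 0 ∧ a2 ≤ q ∧ q ≤ b2) ∧ ¬ InZ pre w d' q),
          |q - pre q| ^ α ≤ ∑ q ∈ P.filter (fun q => 0 < q ∧ q ≤ b), |q - pre q| ^ α := by
        refine Finset.sum_le_sum_of_subset_of_nonneg ?_ (fun q _ _ => hg q)
        intro q hq
        rw [Finset.mem_filter] at hq ⊢
        rcases main q hq.1 hq.2 with ⟨i1, i2⟩ | ⟨i1, i2⟩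
        · exact ⟨hq.1, i1, i2.trans hwb⟩
        · linarith
      linarith [I.gp]
    · have : ∑ q ∈ P.filter (fun q => (q ≠ 0 ∧ a2 ≤ q ∧ q ≤ b2) ∧ ¬ InZ pre w d' q),
          |q - pre q| ^ α ≤ ∑ q ∈ P.filter (fun q => q < 0 ∧ a ≤ q), |q - pre q| ^ α := by
        refine Finset.sum_le_sum_of_subset_of_nonneg ?_ (fun q _ _ => hg q)
        intro q hq
        rw [Finset.mem_filter] at hq ⊢
        rcases main q hq.1 hq.2 with ⟨i1, i2⟩ | ⟨i1, i2⟩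
        · linarith
        · exact ⟨hq.1, i2, haw.trans i1⟩
      linarith [I.gn]

theorem exists_structured {α : ℝ} (hα : 1 < α) {P : Finset ℝ} (hP : (0:ℝ) ∈ P) {pre : ℝ → ℝ}
    (h : IsPre P pre) {ρ : ℝ → ℝ} (hρ : Feasible P 0 ρ) :
    ∃ c ∈ P, ∃ d ∈ P, SC α P pre c d ≤ cost α P ρ := by
  have hrn : ∀ p ∈ P, 0 ≤ ρ p ^ α := fun p hp => Real.rpow_nonneg (hρ.1 p hp) _
  suffices H : ∀ n : ℕ, ∀ S a b, (P \ S).card = n → BInv α P pre ρ S a b →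
      ∃ c ∈ P, ∃ d ∈ P, SC α P pre c d ≤ cost α P ρ by
    refine H _ ∅ 0 0 rfl ⟨by simp, hP, hP, le_rfl, le_rfl, by simp, ?_, ?_, 0, hP, 0, hP, ?_⟩
    · rw [Finset.filter_false_of_mem]; · simp
      rintro q - ⟨h1, h2⟩; linarith
    · rw [Finset.filter_false_of_mem]; · simp
      rintro q - ⟨h1, h2⟩; linarith
    · rw [Finset.filter_false_of_mem]
      · simp [Real.zero_rpow (by linarith : α ≠ 0)]
      rintro q - ⟨⟨h0, h1, h2⟩, -⟩; exact h0 (le_antisymm h2 h1)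
  intro n
  induction n using Nat.strong_induction_on with
  | _ n ih =>
    intro S a b hn I
    by_cases hall : ∀ p ∈ P, a ≤ p ∧ p ≤ b
    · obtain ⟨c, hc, d, hd, hcd⟩ := I.str
      refine ⟨c, hc, d, hd, ?_⟩
      have e1 : P.filter (fun q => (q ≠ 0 ∧ a ≤ q ∧ q ≤ b) ∧ ¬ InZ pre c d q) =
          P.filter (fun q => q ≠ 0 ∧ ¬ InZ pre c d q) := by
        apply Finset.filter_congr
        intro q hq
        have := hall q hq
        tauto
      rw [e1] at hcd
      refine le_trans hcd ?_
      exact Finset.sum_le_sum_of_subset_of_nonneg I.sub (fun p hp _ => hrn p hp)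
    · push Not at hall
      obtain ⟨p, hp, hpo⟩ := hall
      obtain ⟨m, f, f0, fm, fP, fs⟩ := hρ.2 p hp
      have : ∃ i < m, (a ≤ f i ∧ f i ≤ b) ∧ ¬ (a ≤ f (i+1) ∧ f (i+1) ≤ b) := by
        by_contra hcon
        push Not at hcon
        have : ∀ i ≤ m, a ≤ f i ∧ f i ≤ b := by
          intro i
          induction i with
          | zero => intro _; rw [f0]; exact ⟨I.a0, I.b0⟩
          | succ j ihj =>
            intro hj
            have h1 := ihj (by omega)
            exact hcon j (by omega) h1
        have h2 := this m le_rfl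
        rw [fm] at h2
        linarith [hpo h2.1]
      obtain ⟨i, him, hin, hout⟩ := this
      have hwS : f i ∉ S := by
        intro hS
        apply hout
        refine I.cov _ hS _ (fP _ (by omega)) ?_
        have := fs i him
        rwa [dist_comm, Real.dist_eq] at this
      have hwP := fP i him.le
      obtain ⟨a', b', I'⟩ := I.step hα hP h hρ.1 hwP hin.1 hin.2 hwS
      refine ih _ ?_ _ a' b' rfl I'
      rw [← hn]
      apply Finset.card_lt_card
      rw [Finset.ssubset_iff_of_subset]
      · exact ⟨f i, by simp [hwP, hwS], by simp⟩
      · intro x hx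
        simp only [Finset.mem_sdiff, Finset.mem_insert, not_or] at hx ⊢
        exact ⟨hx.1, hx.2.2⟩

/-- Reachability by hops. -/
def Reach (P : Finset ℝ) (ρ : ℝ → ℝ) (p : ℝ) : Prop :=
  ∃ (m : ℕ) (f : ℕ → ℝ), f 0 = 0 ∧ f m = p ∧ (∀ i ≤ m, f i ∈ P) ∧
    ∀ i < m, dist (f i) (f (i + 1)) ≤ ρ (f i)

theorem Reach.zero {P : Finset ℝ} (hP : (0:ℝ) ∈ P) (ρ : ℝ → ℝ) : Reach P ρ 0 :=
  ⟨0, fun _ => 0, rfl, rfl, fun _ _ => hP, fun i hi => absurd hi (by omega)⟩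

theorem Reach.hop {P : Finset ℝ} {ρ : ℝ → ℝ} {p q : ℝ} (hr : Reach P ρ p) (hq : q ∈ P)
    (hpq : |q - p| ≤ ρ p) : Reach P ρ q := by
  obtain ⟨m, f, f0, fm, fP, fs⟩ := hr
  refine ⟨m + 1, fun i => if i ≤ m then f i else q, by simp [f0], by simp, ?_, ?_⟩
  · intro i _
    by_cases hi : i ≤ m
    · simp [hi, fP i hi]
    · simp [hi, hq]
  · intro i hi
    have hi' : i ≤ m := by omega
    by_cases h2 : i + 1 ≤ m
    · simp only [hi', h2, if_true]; exact fs i (by omega)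
    · have : i = m := by omega
      subst this
      simp only [le_refl, if_true, h2, if_false, fm]
      rw [dist_comm, Real.dist_eq]; exact hpq

/-- The structured assignment omitting the gaps in `K`. -/
noncomputable def asg (α : ℝ) (P : Finset ℝ) (pre : ℝ → ℝ) (K : Finset ℝ) (c d : ℝ) (p : ℝ) : ℝ :=
  ((if p = c then |c - d| ^ α else 0) +
    ∑ q ∈ P.filter (fun q => (q ≠ 0 ∧ q ∉ K) ∧ pre q = p), |q - pre q| ^ α) ^ (1 / α)

theorem asg_base_nonneg (α : ℝ) (P : Finset ℝ) (pre : ℝ → ℝ) (K : Finset ℝ) (c d : ℝ) (p : ℝ) :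
    0 ≤ (if p = c then |c - d| ^ α else 0) +
    ∑ q ∈ P.filter (fun q => (q ≠ 0 ∧ q ∉ K) ∧ pre q = p), |q - pre q| ^ α := by
  refine add_nonneg ?_ (Finset.sum_nonneg fun q _ => Real.rpow_nonneg (abs_nonneg _) _)
  split_ifs
  · exact Real.rpow_nonneg (abs_nonneg _) _
  · exact le_rfl

theorem le_rpow_inv_of {α x B : ℝ} (hα : 1 < α) (hx : 0 ≤ x) (hB : x ^ α ≤ B) :
    x ≤ B ^ (1 / α) := by
  calc x = (x ^ α) ^ (1 / α) := by
        rw [← Real.rpow_mul hx, mul_one_div_cancel (by linarith), Real.rpow_one]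
    _ ≤ _ := Real.rpow_le_rpow (Real.rpow_nonneg hx _) hB (by positivity)

theorem asg_center {α : ℝ} (hα : 1 < α) (P : Finset ℝ) (pre : ℝ → ℝ) (K : Finset ℝ) (c d : ℝ) :
    |c - d| ≤ asg α P pre K c d c := by
  refine le_rpow_inv_of hα (abs_nonneg _) ?_
  rw [if_pos rfl]
  exact le_add_of_nonneg_right (Finset.sum_nonneg fun q _ => Real.rpow_nonneg (abs_nonneg _) _)

theorem asg_gap {α : ℝ} (hα : 1 < α) (P : Finset ℝ) (pre : ℝ → ℝ) (K : Finset ℝ) (c d q : ℝ)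
    (hq : q ∈ P) (h0 : q ≠ 0) (hK : q ∉ K) :
    |q - pre q| ≤ asg α P pre K c d (pre q) := by
  refine le_rpow_inv_of hα (abs_nonneg _) ?_
  refine le_trans (Finset.single_le_sum (s := P.filter
    (fun q' => (q' ≠ 0 ∧ q' ∉ K) ∧ pre q' = pre q)) (f := fun q => |q - pre q| ^ α)
    (fun q _ => Real.rpow_nonneg (abs_nonneg _) _) (a := q) (by simp [hq, h0, hK])) ?_
  refine le_add_of_nonneg_left ?_
  split_ifs
  · exact Real.rpow_nonneg (abs_nonneg _) _
  · exact le_rfl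

theorem asg_cost {α : ℝ} (hα : 1 < α) {P : Finset ℝ} {pre : ℝ → ℝ} (h : IsPre P pre)
    (K : Finset ℝ) {c d : ℝ} (hc : c ∈ P) :
    cost α P (asg α P pre K c d) =
      |c - d| ^ α + ∑ q ∈ P.filter (fun q => q ≠ 0 ∧ q ∉ K), |q - pre q| ^ α := by
  unfold cost
  have : ∀ p ∈ P, asg α P pre K c d p ^ α = (if p = c then |c - d| ^ α else 0) +
    ∑ q ∈ P.filter (fun q => (q ≠ 0 ∧ q ∉ K) ∧ pre q = p), |q - pre q| ^ α := by
    intro p _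
    unfold asg
    rw [← Real.rpow_mul (asg_base_nonneg α P pre K c d p), one_div,
      inv_mul_cancel₀ (by linarith), Real.rpow_one]
  rw [Finset.sum_congr rfl this, Finset.sum_add_distrib]
  congr 1
  · simp [hc]
  · rw [← Finset.sum_fiberwise_of_maps_to (s := P.filter (fun q => q ≠ 0 ∧ q ∉ K)) (t := P)
      (g := pre)]
    · simp only [Finset.filter_filter]
    · intro q hq
      rw [Finset.mem_filter] at hq
      exact h.mem q hq.1 hq.2.1

theorem asg_feasible {α : ℝ} (hα : 1 < α) {P : Finset ℝ} (hP : (0:ℝ) ∈ P) {pre : ℝ → ℝ}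
    (h : IsPre P pre) (K : Finset ℝ) {c d : ℝ} (hc : c ∈ P)
    (hK : ∀ q ∈ K, InZ pre c d q) : Feasible P 0 (asg α P pre K c d) := by
  refine ⟨fun p _ => Real.rpow_nonneg (asg_base_nonneg α P pre K c d p) _, ?_⟩
  have hpre : ∀ q ∈ P, q ≠ 0 → |pre q| < |q| := by
    intro q hq h0
    rcases lt_or_gt_of_ne h0 with hs | hs
    · obtain ⟨i1, i2, -⟩ := h.neg q hq hs
      rw [abs_of_nonpos i1, abs_of_neg hs]; linarith
    · obtain ⟨i1, i2, -⟩ := h.pos q hq hs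
      rw [abs_of_nonneg i1, abs_of_pos hs]; linarith
  have gen : ∀ B : ℝ → Prop, (∀ q ∈ P, q ≠ 0 → B q → (Reach P (asg α P pre K c d) (pre q) →
      Reach P (asg α P pre K c d) q) ∧ (pre q = 0 ∨ B (pre q))) →
      ∀ q ∈ P, B q → Reach P (asg α P pre K c d) q := by
    intro B hB
    by_contra hcon
    push Not at hcon
    obtain ⟨q₀, hq₀, hBq₀, hR₀⟩ := hcon
    obtain ⟨q, hq, hmin⟩ := Finset.exists_min_image
      (P.filter (fun q => B q ∧ ¬ Reach P (asg α P pre K c d) q)) (fun q => |q|)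
      ⟨q₀, by simp [hq₀, hBq₀, hR₀]⟩
    simp only [Finset.mem_filter] at hq hmin
    obtain ⟨hqP, hqB, hqR⟩ := hq
    have h0 : q ≠ 0 := by rintro rfl; exact hqR (Reach.zero hP _)
    obtain ⟨h1, h2⟩ := hB q hqP h0 hqB
    apply hqR
    apply h1
    rcases h2 with h2 | h2
    · rw [h2]; exact Reach.zero hP _
    · by_contra hn
      have := hmin (pre q) ⟨h.mem q hqP h0, h2, hn⟩
      linarith [hpre q hqP h0]
  have hcR : Reach P (asg α P pre K c d) c := by
    by_cases c0 : c = 0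
    · rw [c0]; exact Reach.zero hP _
    refine gen (fun q => (0 < q ∧ q ≤ c) ∨ (c ≤ q ∧ q < 0)) ?_ c hc ?_
    · intro q hq h0 hB
      constructor
      · intro hr
        refine hr.hop hq (asg_gap hα P pre K c d q hq h0 ?_)
        intro hqK
        obtain ⟨-, -, n1, n2⟩ := hK q hqK
        tauto
      · rcases hB with ⟨i1, i2⟩ | ⟨i1, i2⟩
        · obtain ⟨j1, j2, -⟩ := h.pos q hq i1
          rcases j1.eq_or_lt with e | e
          · exact Or.inl e.symm
          · exact Or.inr (Or.inl ⟨e, by linarith⟩)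
        · obtain ⟨j1, j2, -⟩ := h.neg q hq i2
          rcases j1.eq_or_lt with e | e
          · exact Or.inl e
          · exact Or.inr (Or.inr ⟨by linarith, e⟩)
    · rcases lt_or_gt_of_ne c0 with hs | hs
      · exact Or.inr ⟨le_rfl, hs⟩
      · exact Or.inl ⟨hs, le_rfl⟩
  intro p hp
  refine gen (fun _ => True) ?_ p hp trivial
  intro q hq h0 _
  refine ⟨fun hr => ?_, Or.inr trivial⟩
  by_cases hqK : q ∈ K
  · exact hcR.hop hq ((hK q hqK).1.trans (asg_center hα P pre K c d))
  · exact hr.hop hq (asg_gap hα P pre K c d q hq h0 hqK)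

theorem exists_K {α : ℝ} (hα : 1 < α) {P : Finset ℝ} {pre : ℝ → ℝ}
    (h : IsPre P pre) (c d : ℝ) (hc : c ∈ P) (k : ℕ) (hk : 1 ≤ k) :
    ∃ K : Finset ℝ, K.card ≤ k ∧ (∀ q ∈ K, InZ pre c d q) ∧
      ∑ q ∈ P.filter (fun q => q ≠ 0 ∧ InZ pre c d q ∧ q ∉ K), |q - pre q| ^ α ≤
        2 ^ α / (k : ℝ) ^ (α - 1) * |c - d| ^ α := by
  set r := |c - d| with hr
  have hr0 : 0 ≤ r := abs_nonneg _
  have hk0 : (0:ℝ) < k := by exact_mod_cast hk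
  set Z := P.filter (fun q => q ≠ 0 ∧ InZ pre c d q) with hZ
  have hZp : ∑ q ∈ Z.filter (fun q => 0 < q), |q - pre q| ≤ r := by
    refine (sum_len h _ ?_ c (c + r) (by linarith) ?_).trans (by linarith)
    · intro q hq
      simp only [hZ, Finset.mem_filter] at hq
      exact ⟨hq.1.1, hq.1.2.1⟩
    · intro q hq
      simp only [hZ, Finset.mem_filter] at hq
      obtain ⟨⟨hqP, h0, z1, z2, z3, z4⟩, hpos⟩ := hq
      obtain ⟨i1, i2, i3⟩ := h.pos q hqP hpos
      have hcq : c < q := by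
        by_contra hn
        exact z3 ⟨hpos, not_lt.1 hn⟩
      have := i3 c hc hcq
      rw [abs_le] at z1 z2
      refine ⟨?_, ?_, ?_, ?_⟩ <;> linarith
  have hZn : ∑ q ∈ Z.filter (fun q => ¬ 0 < q), |q - pre q| ≤ r := by
    refine (sum_len h _ ?_ (c - r) c (by linarith) ?_).trans (by linarith)
    · intro q hq
      simp only [hZ, Finset.mem_filter] at hq
      exact ⟨hq.1.1, hq.1.2.1⟩
    · intro q hq
      simp only [hZ, Finset.mem_filter] at hq
      obtain ⟨⟨hqP, h0, z1, z2, z3, z4⟩, hnpos⟩ := hq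
      have hneg : q < 0 := lt_of_le_of_ne (not_lt.1 hnpos) h0
      obtain ⟨i1, i2, i3⟩ := h.neg q hqP hneg
      have hcq : q < c := by
        by_contra hn
        exact z4 ⟨not_lt.1 hn, hneg⟩
      have := i3 c hc hcq
      rw [abs_le] at z1 z2
      refine ⟨?_, ?_, ?_, ?_⟩ <;> linarith
  have hZs : ∑ q ∈ Z, |q - pre q| ≤ 2 * r := by
    rw [← Finset.sum_filter_add_sum_filter_not Z (fun q => 0 < q)]
    linarith
  refine ⟨Z.filter (fun q => 2 * r / k < |q - pre q|), ?_, ?_, ?_⟩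
  · by_contra hcard
    push Not at hcard
    have hne : (Z.filter (fun q => 2 * r / k < |q - pre q|)).Nonempty := by
      rw [← Finset.card_pos]; omega
    have h1 : ∑ q ∈ Z.filter (fun q => 2 * r / k < |q - pre q|), 2 * r / k <
        ∑ q ∈ Z.filter (fun q => 2 * r / k < |q - pre q|), |q - pre q| :=
      Finset.sum_lt_sum_of_nonempty hne (fun q hq => (Finset.mem_filter.1 hq).2)
    have h2 : ∑ q ∈ Z.filter (fun q => 2 * r / k < |q - pre q|), |q - pre q| ≤
        ∑ q ∈ Z, |q - pre q| :=
      Finset.sum_le_sum_of_subset_of_nonneg (Finset.filter_subset _ _)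
        (fun _ _ _ => abs_nonneg _)
    rw [Finset.sum_const, nsmul_eq_mul] at h1
    have h3 : (k:ℝ) * (2 * r / k) ≤
        ((Z.filter (fun q => 2 * r / k < |q - pre q|)).card : ℝ) * (2 * r / k) :=
      mul_le_mul_of_nonneg_right (by exact_mod_cast hcard.le) (by positivity)
    rw [mul_div_cancel₀ _ hk0.ne'] at h3
    linarith
  · intro q hq
    exact (Finset.mem_filter.1 (Finset.mem_filter.1 hq).1).2.2
  · have hsub : P.filter (fun q => q ≠ 0 ∧ InZ pre c d q ∧
        q ∉ Z.filter (fun q => 2 * r / k < |q - pre q|)) ⊆ Z := by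
      intro q hq
      rw [Finset.mem_filter] at hq
      rw [hZ, Finset.mem_filter]
      exact ⟨hq.1, hq.2.1, hq.2.2.1⟩
    refine (sum_rpow_le _ _ α (2 * r / k) (2 * r) hα (fun _ _ => abs_nonneg _) ?_
      (by positivity) ?_).trans (le_of_eq ?_)
    · intro q hq
      by_contra hn
      exact (Finset.mem_filter.1 hq).2.2.2 (Finset.mem_filter.2 ⟨hsub hq, not_le.1 hn⟩)
    · exact (Finset.sum_le_sum_of_subset_of_nonneg hsub (fun _ _ _ => abs_nonneg _)).trans hZs
    · rw [Real.div_rpow (by positivity) hk0.le, div_mul_eq_mul_div,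
        rpow_sub_mul hα (by positivity), Real.mul_rpow (by norm_num) hr0]
      ring

theorem pre_suc {P : Finset ℝ} {pre : ℝ → ℝ} (h : IsPre P pre) {p : ℝ} (hp : p ∈ P)
    (hs : HasSuc P p) : suc P p ∈ P ∧ suc P p ≠ 0 ∧ pre (suc P p) = p := by
  rcases hs with ⟨h0, x, hx, hpx⟩ | ⟨h0, x, hx, hpx⟩
  · have e : suc P p = sInf {q | q ∈ P ∧ p < q} := by unfold suc; rw [if_pos h0]
    have hfin : {q | q ∈ P ∧ p < q}.Finite := P.finite_toSet.subset (fun q hq => hq.1)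
    have hm : sInf {q | q ∈ P ∧ p < q} ∈ {q | q ∈ P ∧ p < q} :=
      Set.Nonempty.csInf_mem ⟨x, hx, hpx⟩ hfin
    have hle : ∀ y ∈ P, p < y → sInf {q | q ∈ P ∧ p < q} ≤ y := fun y hy hpy =>
      csInf_le hfin.bddBelow ⟨hy, hpy⟩
    rw [← e] at hm hle
    obtain ⟨m1, m2⟩ := hm
    have hsp : 0 < suc P p := h0.trans m2
    obtain ⟨i1, i2, i3⟩ := h.pos _ m1 hsp
    refine ⟨m1, hsp.ne', le_antisymm ?_ (i3 p hp m2)⟩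
    by_contra hn
    linarith [hle _ (h.mem _ m1 hsp.ne') (not_le.1 hn)]
  · have e : suc P p = sSup {q | q ∈ P ∧ q < p} := by
      unfold suc; rw [if_neg (not_lt.2 h0.le)]
    have hfin : {q | q ∈ P ∧ q < p}.Finite := P.finite_toSet.subset (fun q hq => hq.1)
    have hm : sSup {q | q ∈ P ∧ q < p} ∈ {q | q ∈ P ∧ q < p} :=
      Set.Nonempty.csSup_mem ⟨x, hx, hpx⟩ hfin
    have hle : ∀ y ∈ P, y < p → y ≤ sSup {q | q ∈ P ∧ q < p} := fun y hy hpy =>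
      le_csSup hfin.bddAbove ⟨hy, hpy⟩
    rw [← e] at hm hle
    obtain ⟨m1, m2⟩ := hm
    have hsp : suc P p < 0 := m2.trans h0
    obtain ⟨i1, i2, i3⟩ := h.neg _ m1 hsp
    refine ⟨m1, hsp.ne, le_antisymm (i3 p hp m2) ?_⟩
    by_contra hn
    linarith [hle _ (h.mem _ m1 hsp.ne) (not_le.1 hn)]

/-- The canonical range assignment: for every finite `P ⊂ ℝ` containing the
source 0 and every `k ≥ 1` there is a feasible assignment of cost at most
`(1 + 2^α/k^{α-1})·opt` in which at most `k` non-source points with a successor are assigned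
less than their standard range. -/
theorem canonical_assignment_cost (α : ℝ) (hα : 1 < α)
    (P : Finset ℝ) (hP : (0:ℝ) ∈ P) (k : ℕ) (hk : 1 ≤ k) :
    ∃ ρ : ℝ → ℝ, Feasible P 0 ρ ∧
      cost α P ρ ≤ (1 + 2 ^ α / (k : ℝ) ^ (α - 1)) * opt α P 0 ∧
      {p ∈ (P : Set ℝ) | p ≠ 0 ∧ HasSuc P p ∧ ρ p < |suc P p - p|}.ncard ≤ k := by
  obtain ⟨pre, h⟩ := exists_isPre P hP
  obtain ⟨⟨c, d⟩, hcd, hmin⟩ := Finset.exists_min_image (P ×ˢ P)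
    (fun x => SC α P pre x.1 x.2) ⟨(0, 0), by simp [hP]⟩
  obtain ⟨hc, hd⟩ := Finset.mem_product.1 hcd
  simp only at hc hd hmin
  obtain ⟨K, hKc, hKZ, hKs⟩ := exists_K hα h c d hc k hk
  have hfeas := asg_feasible hα hP h K (d := d) hc hKZ
  have hopt : SC α P pre c d ≤ opt α P 0 := by
    refine le_csInf ⟨_, _, hfeas, rfl⟩ ?_
    rintro _ ⟨ρ, hρ, rfl⟩
    obtain ⟨c', hc', d', hd', hle⟩ := exists_structured hα hP h hρ
    exact (hmin (c', d') (Finset.mem_product.2 ⟨hc', hd'⟩)).trans hle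
  have hg : ∀ q, 0 ≤ |q - pre q| ^ α := fun q => Real.rpow_nonneg (abs_nonneg _) _
  refine ⟨asg α P pre K c d, hfeas, ?_, ?_⟩
  · rw [asg_cost hα h K hc]
    have h1 := sum_split_le P _ hg (fun q => q ≠ 0 ∧ q ∉ K) (fun q => q ≠ 0 ∧ ¬ InZ pre c d q)
      (fun q => q ≠ 0 ∧ InZ pre c d q ∧ q ∉ K) (fun q _ hq => by tauto)
    have h2 : |c - d| ^ α ≤ SC α P pre c d :=
      le_add_of_nonneg_right (Finset.sum_nonneg fun q _ => hg q)
    have h3 : (0:ℝ) ≤ 2 ^ α / (k : ℝ) ^ (α - 1) := by positivity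
    have h4 := mul_le_mul_of_nonneg_left (h2.trans hopt) h3
    unfold SC at hopt
    linarith
  · refine le_trans ?_ hKc
    have hsub : {p ∈ (P : Set ℝ) | p ≠ 0 ∧ HasSuc P p ∧ asg α P pre K c d p < |suc P p - p|} ⊆
        ((K.image pre : Finset ℝ) : Set ℝ) := by
      rintro p ⟨hp, -, hs, hlt⟩
      obtain ⟨s1, s2, s3⟩ := pre_suc h hp hs
      rw [Finset.mem_coe, Finset.mem_image]
      refine ⟨suc P p, ?_, s3⟩
      by_contra hK
      have := asg_gap hα P pre K c d (suc P p) s1 s2 hK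
      rw [s3] at this
      linarith
    calc _ ≤ ((K.image pre : Finset ℝ) : Set ℝ).ncard :=
          Set.ncard_le_ncard hsub (Finset.finite_toSet _)
      _ = (K.image pre).card := Set.ncard_coe_finset _
      _ ≤ K.card := Finset.card_image_le
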